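/- Let G be a finite simple graph and L a list assignment with |L(v)| ≥ 3 for every vertex v. Suppose G is not (L,1)*-colorable, but for every nonempty set S of vertices the induced subgraph G − S admits the restriction of L as an (L,1)*-coloring (i.e., every proper induced subgraph of G is (L,1)*-colorable). Then every vertex of G has degree at least 3 and no two vertices of degree 3 in G are adjacent. -/

import Mathlib

/-!
A coloring of `G - S` extends to `G` as soon as every `v ∈ S` has fewer than `|L v|` neighbors
outside `S` and at most one neighbor inside `S`: give `v` a color of its list used by none of its
neighbors outside `S`. No edge between `S` and its complement is then monochromatic, and inside `S`
the degrees are too small for a violation. In a critical graph every nonempty `S` of maximum inner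
degree at most one therefore has a vertex with at least `|L v|` neighbors outside `S`; taking for
`S` a single vertex and the two ends of an edge gives the two claims.
-/

/-- An `(L,1)*`-coloring of `G`: every vertex gets a color from its list, and
each vertex has at most one neighbor receiving its own color. -/
def IsL1StarColoring {V α : Type*} (G : SimpleGraph V) (L : V → Finset α)
    (φ : V → α) : Prop :=
  (∀ v, φ v ∈ L v) ∧
    ∀ v u w, G.Adj v u → G.Adj v w → φ u = φ v → φ w = φ v → u = w

open Finset

theorem exists_mem_forall_ne_of_encard_lt_card {ι α : Type*} {s : Set ι} {t : Finset α}
    (h : s.encard < #t) (f : ι → α) : ∃ c ∈ t, ∀ i ∈ s, f i ≠ c := by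
  by_contra! hcover
  have hsub : (t : Set α) ⊆ f '' s := hcover
  have hle : #t ≤ s.encard := by
    rw [← Set.encard_coe_eq_coe_finsetCard]
    exact (Set.encard_le_encard hsub).trans (Set.encard_image_le f s)
  exact h.not_ge hle

theorem encard_neighborSet_eq_degree {V : Type*} (G : SimpleGraph V) (v : V)
    [Fintype (G.neighborSet v)] : (G.neighborSet v).encard = G.degree v := by
  rw [← Set.coe_fintypeCard, G.card_neighborSet_eq_degree]

section ColoringExtension

variable {V α : Type*} {G : SimpleGraph V} {L : V → Finset α} {S : Set V}

theorem IsL1StarColoring.of_induce_of_induce_compl {φ : V → α}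
    (hS : IsL1StarColoring (G.induce S) (fun v => L v) (fun v => φ v))
    (hSc : IsL1StarColoring (G.induce Sᶜ) (fun v => L v) (fun v => φ v))
    (hcross : ∀ v ∈ S, ∀ w ∉ S, G.Adj v w → φ w ≠ φ v) : IsL1StarColoring G L φ := by
  refine ⟨fun v => ?_, fun v u w hvu hvw hu hw => ?_⟩
  · by_cases hv : v ∈ S
    · exact hS.1 ⟨v, hv⟩
    · exact hSc.1 ⟨v, hv⟩
  · by_cases hv : v ∈ S
    · have mem_of_adj {x : V} (hvx : G.Adj v x) (hx : φ x = φ v) : x ∈ S :=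
        by_contra fun hxS => hcross v hv x hxS hvx hx
      exact congrArg Subtype.val <| hS.2 ⟨v, hv⟩ ⟨u, mem_of_adj hvu hu⟩
        ⟨w, mem_of_adj hvw hw⟩ hvu hvw hu hw
    · have notMem_of_adj {x : V} (hvx : G.Adj v x) (hx : φ x = φ v) : x ∉ S :=
        fun hxS => hcross x hxS v hv hvx.symm hx.symm
      exact congrArg Subtype.val <| hSc.2 ⟨v, hv⟩ ⟨u, notMem_of_adj hvu hu⟩
        ⟨w, notMem_of_adj hvw hw⟩ hvu hvw hu hw

theorem IsL1StarColoring.exists_of_induce_compl {φ : ↥Sᶜ → α}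
    (hφ : IsL1StarColoring (G.induce Sᶜ) (fun v => L v) φ)
    (hin : ∀ v ∈ S, (G.neighborSet v ∩ S).Subsingleton)
    (hout : ∀ v ∈ S, (G.neighborSet v \ S).encard < #(L v)) :
    ∃ ψ : V → α, IsL1StarColoring G L ψ := by
  classical
  have exists_free_color (v : S) : ∃ c ∈ L v, ∀ w : ↥Sᶜ, G.Adj v w → φ w ≠ c := by
    have hlt : (Subtype.val ⁻¹' (G.neighborSet v \ S) : Set ↥Sᶜ).encard < #(L v) :=
      (Set.encard_preimage_val_le_encard_right _ _).trans_lt (hout v v.2)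
    obtain ⟨c, hcL, hc⟩ := exists_mem_forall_ne_of_encard_lt_card hlt φ
    exact ⟨c, hcL, fun w hvw => hc w ⟨hvw, w.2⟩⟩
  choose c hcL hc using exists_free_color
  let ψ (v : V) : α := if hv : v ∈ S then c ⟨v, hv⟩ else φ ⟨v, hv⟩
  have ψ_mem (v : S) : ψ v = c v := dif_pos v.2
  have ψ_notMem (v : ↥Sᶜ) : ψ v = φ v := dif_neg v.2
  refine ⟨ψ, .of_induce_of_induce_compl (S := S) ⟨fun v => ?_, ?_⟩ ?_ ?_⟩
  · simpa only [ψ_mem] using hcL v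
  · exact fun v u w hvu hvw _ _ => Subtype.ext (hin v v.2 ⟨hvu, u.2⟩ ⟨hvw, w.2⟩)
  · simpa only [ψ_notMem] using hφ
  · intro v hv w hw hvw
    rw [ψ_mem ⟨v, hv⟩, ψ_notMem ⟨w, hw⟩]
    exact hc ⟨v, hv⟩ ⟨w, hw⟩ hvw

end ColoringExtension

/-- `G` is `(L,1)*`-critical: it has no `(L,1)*`-coloring, but each of its proper induced subgraphs
has one for the restricted lists. The subgraph `G - S` is encoded as `G.induce Sᶜ`. -/
structure IsL1StarCritical {V α : Type*} (G : SimpleGraph V) (L : V → Finset α) : Prop where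
  not_exists_coloring : ¬ ∃ φ : V → α, IsL1StarColoring G L φ
  exists_coloring_induce_compl : ∀ S : Set V, S.Nonempty →
    ∃ φ : ↥Sᶜ → α, IsL1StarColoring (G.induce Sᶜ) (fun w => L w.1) φ

namespace IsL1StarCritical

variable {V α : Type*} {G : SimpleGraph V} {L : V → Finset α}

theorem exists_card_le_encard_neighborSet_sdiff (h : IsL1StarCritical G L) {S : Set V}
    (hS : S.Nonempty) (hin : ∀ v ∈ S, (G.neighborSet v ∩ S).Subsingleton) :
    ∃ v ∈ S, #(L v) ≤ (G.neighborSet v \ S).encard := by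
  by_contra! hout
  obtain ⟨φ, hφ⟩ := h.exists_coloring_induce_compl S hS
  exact h.not_exists_coloring (hφ.exists_of_induce_compl hin hout)

theorem card_le_encard_neighborSet (h : IsL1StarCritical G L) (v : V) :
    #(L v) ≤ (G.neighborSet v).encard := by
  obtain ⟨_, rfl, hv⟩ := h.exists_card_le_encard_neighborSet_sdiff (Set.singleton_nonempty v)
    fun _ _ => Set.subsingleton_singleton.anti Set.inter_subset_right
  exact hv.trans (Set.encard_le_encard Set.sdiff_subset)

theorem card_lt_encard_neighborSet_or_of_adj (h : IsL1StarCritical G L) {u v : V}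
    (huv : G.Adj u v) :
    #(L u) < (G.neighborSet u).encard ∨ #(L v) < (G.neighborSet v).encard := by
  have lt_of_le_sdiff {x y : V} (hxy : G.Adj x y) (hy : y ∈ ({u, v} : Set V))
      (hx : #(L x) ≤ (G.neighborSet x \ {u, v}).encard) : #(L x) < (G.neighborSet x).encard := by
    have hsub : G.neighborSet x \ {u, v} ⊆ G.neighborSet x \ {y} :=
      Set.sdiff_subset_sdiff_right (Set.singleton_subset_iff.mpr hy)
    rw [← ENat.add_one_le_iff (ENat.natCast_ne_top _),
      ← Set.encard_sdiff_singleton_add_one (show y ∈ G.neighborSet x from hxy)]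
    gcongr
    exact hx.trans (Set.encard_le_encard hsub)
  have hin : ∀ x ∈ ({u, v} : Set V), (G.neighborSet x ∩ {u, v}).Subsingleton := by
    rintro x (rfl | rfl)
    · rw [Set.inter_insert_of_notMem G.notMem_neighborSet_self]
      exact Set.subsingleton_singleton.anti Set.inter_subset_right
    · rw [Set.pair_comm, Set.inter_insert_of_notMem G.notMem_neighborSet_self]
      exact Set.subsingleton_singleton.anti Set.inter_subset_right
  obtain ⟨x, rfl | rfl, hx⟩ :=
    h.exists_card_le_encard_neighborSet_sdiff (Set.insert_nonempty u {v}) hin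
  · exact .inl (lt_of_le_sdiff huv (by simp) hx)
  · exact .inr (lt_of_le_sdiff huv.symm (by simp) hx)

end IsL1StarCritical

theorem stmt_6_general {V α : Type*} {G : SimpleGraph V} {L : V → Finset α}
    (h : IsL1StarCritical G L) :
    (∀ (v : V) [Fintype (G.neighborSet v)], #(L v) ≤ G.degree v) ∧
      ∀ (u v : V) [Fintype (G.neighborSet u)] [Fintype (G.neighborSet v)],
        G.degree u ≤ #(L u) → G.degree v ≤ #(L v) → ¬ G.Adj u v := by
  refine ⟨fun v _ => ?_, fun u v _ _ hu hv huv => ?_⟩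
  · exact_mod_cast encard_neighborSet_eq_degree G v ▸ h.card_le_encard_neighborSet v
  · have hlt := h.card_lt_encard_neighborSet_or_of_adj huv
    rw [encard_neighborSet_eq_degree, encard_neighborSet_eq_degree] at hlt
    norm_cast at hlt
    exact hlt.elim hu.not_gt hv.not_gt

/-- If all lists have size at least 3, `G` is not `(L,1)*`-colorable, but every
proper induced subgraph of `G` is (with the restricted lists), then every
vertex has degree at least 3 and no two vertices of degree 3 are adjacent. -/
theorem stmt_6 {V α : Type*} [Fintype V] [DecidableEq V]
    (G : SimpleGraph V) [DecidableRel G.Adj]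
    (L : V → Finset α) (hL : ∀ v, 3 ≤ (L v).card)
    (hG : ¬ ∃ φ : V → α, IsL1StarColoring G L φ)
    (hmin : ∀ S : Set V, S.Nonempty →
      ∃ φ : ↥Sᶜ → α, IsL1StarColoring (G.induce Sᶜ) (fun w => L w.1) φ) :
    (∀ v : V, 3 ≤ G.degree v) ∧
      ∀ u v : V, G.degree u = 3 → G.degree v = 3 → ¬ G.Adj u v := by
  obtain ⟨hdeg, hadj⟩ := stmt_6_general ⟨hG, hmin⟩
  exact ⟨fun v => (hL v).trans (hdeg v),
    fun u v hu hv => hadj u v (hu.trans_le (hL u)) (hv.trans_le (hL v))⟩
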